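/- arXiv:1508.05813 — 2 statements merged into one kernel-verified Lean document; each statement's English description precedes it below -/
import Mathlib

section
/- Let (R,m) be a commutative Noetherian local ring and let C be a semidualizing R-module. Then the type r_R(C) divides the type r_R(R). In particular, if r_R(R) = 1 (for example if R is Gorenstein), then C is isomorphic to R. -/
/-!
Let `k` be the residue field of `R` and let `n` be the minimal number of generators of `C`, so that
`k ⊗ C ≃ k^n`. The theorem follows from `r(R) = n * r(C)`: then `r(R) = 1` forces `n = 1`, so `C` is
cyclic, and a cyclic faithful module is free of rank one.

Conceptually `R = RHom(C, C)` gives `RHom(k, R) = RHom(k ⊗ᴸ C, C)`. All `Tor_i(k, C)` are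
finite-dimensional over `k`, so in the lowest degree `t` where `Ext(k, C)` is nonzero only
`Tor_0(k, C) = k^n` contributes, and `Ext^t(k, R) = Ext^t(k, C)^n`. Below that degree both sides
vanish, so `R` and `C` have the same depth `t`.

The proof avoids derived tensor products and shifts dimensions one syzygy at a time
(`nonempty_ext_equiv_ext_tensor`). It works with finite modules `N` such that multiplication on `N`
by each element of the maximal ideal factors through a free module. The residue field has this
property, syzygies inherit it, and for `0 → K → F → N → 0` exact with `F` free, it forces the
maximal ideal to kill the kernel of `K ⊗ C → F ⊗ C`. That kernel is then a finite sum of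
copies of `k`, and its Ext modules into `C` vanish in degrees below `t`. In these dimension shifts
`Ext^i(F ⊗ C, C)` vanishes for `i > 0` because `C` is semidualizing.
-/

open CategoryTheory

universe u

noncomputable section

variable (R : Type u) [CommRing R]

/-- The Ext module `Ext^i_R(M, N)`, via the derived functor definition. -/
noncomputable def extM (M N : Type u) [AddCommGroup M] [Module R M]
    [AddCommGroup N] [Module R N] (i : ℕ) : ModuleCat R :=
  ((Ext R (ModuleCat.{u} R) i).obj (Opposite.op (ModuleCat.of R M))).obj (ModuleCat.of R N)

/-- The Tor module `Tor_i^R(M, N)`, via the derived functor definition. -/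
noncomputable def torM (M N : Type u) [AddCommGroup M] [Module R M]
    [AddCommGroup N] [Module R N] (i : ℕ) : ModuleCat R :=
  ((Tor (ModuleCat.{u} R) i).obj (ModuleCat.of R M)).obj (ModuleCat.of R N)

/-- `C` is a semidualizing `R`-module: it is finitely generated, the homothety map
`R → Hom_R(C,C)` is bijective, and `Ext^i_R(C,C) = 0` for all `i > 0`. -/
def IsSemidualizing (C : Type u) [AddCommGroup C] [Module R C] : Prop :=
  Module.Finite R C ∧
  Function.Bijective (fun r : R => r • (LinearMap.id : C →ₗ[R] C)) ∧
  ∀ i : ℕ, 0 < i → Subsingleton (extM R C C i)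

/-- Injective dimension of a module, characterized via vanishing of Ext. -/
noncomputable def injDim (M : Type u) [AddCommGroup M] [Module R M] : ℕ∞ :=
  sInf {n : ℕ∞ | ∀ (N : Type u) (_ : AddCommGroup N) (_ : Module R N) (i : ℕ),
    n < i → Subsingleton (extM R N M i)}

/-- Flat dimension of a module, characterized via vanishing of Tor. -/
noncomputable def flatDim (M : Type u) [AddCommGroup M] [Module R M] : ℕ∞ :=
  sInf {n : ℕ∞ | ∀ (N : Type u) (_ : AddCommGroup N) (_ : Module R N) (i : ℕ),
    n < i → Subsingleton (torM R N M i)}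

/-- The length of a module, as the height of `⊤` in its submodule lattice. -/
noncomputable def mLength (M : Type u) [AddCommGroup M] [Module R M] : ℕ∞ :=
  Order.height (⊤ : Submodule R M)

/-- Depth of a module over a local ring: the least `i` with `Ext^i(k, M) ≠ 0`. -/
noncomputable def depth [IsLocalRing R] (M : Type u) [AddCommGroup M] [Module R M] : ℕ∞ :=
  sInf {n : ℕ∞ | ∃ i : ℕ, n = i ∧ Nontrivial (extM R (IsLocalRing.ResidueField R) M i)}

/-- Depth, as a natural number. -/
noncomputable def depthNat [IsLocalRing R] (M : Type u) [AddCommGroup M] [Module R M] : ℕ :=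
  sInf {i : ℕ | Nontrivial (extM R (IsLocalRing.ResidueField R) M i)}

/-- The type of a module: `r_R(M) = dim_k Ext^t_R(k, M)` where `t = depth_R(M)`. -/
noncomputable def rtype [IsLocalRing R] (M : Type u) [AddCommGroup M] [Module R M] : ℕ∞ :=
  mLength R (extM R (IsLocalRing.ResidueField R) M (depthNat R M))

/-- A dualizing module: a semidualizing module of finite injective dimension. -/
def IsDualizing (C : Type u) [AddCommGroup C] [Module R C] : Prop :=
  IsSemidualizing R C ∧ injDim R C < ⊤

/-- A pointwise dualizing module: the localization at every maximal ideal is dualizing. -/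
def IsPointwiseDualizing (C : Type u) [AddCommGroup C] [Module R C] : Prop :=
  IsSemidualizing R C ∧ ∀ (p : Ideal R) [p.IsPrime], p.IsMaximal →
    IsDualizing (Localization.AtPrime p) (LocalizedModule p.primeCompl C)

/-- Height of a prime ideal. -/
noncomputable def primeHeight (p : Ideal R) [hp : p.IsPrime] : ℕ∞ :=
  Order.height (⟨p, hp⟩ : PrimeSpectrum R)

/-- A totally `C`-reflexive module. -/
def IsTotallyCReflexive (C M : Type u) [AddCommGroup C] [Module R C]
    [AddCommGroup M] [Module R M] : Prop :=
  Module.Finite R M ∧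
  Function.Bijective ((LinearMap.id : (M →ₗ[R] C) →ₗ[R] (M →ₗ[R] C)).flip) ∧
  ∀ i : ℕ, 0 < i →
    Subsingleton (extM R M C i) ∧ Subsingleton (extM R (M →ₗ[R] C) C i)

/-- `G_C`-dimension of `M` is at most `n`. -/
def gcDimLE (C : Type u) [AddCommGroup C] [Module R C] :
    ℕ → (M : Type u) → [AddCommGroup M] → [Module R M] → Prop
  | 0, M, _, _ => IsTotallyCReflexive R C M
  | n+1, M, _, _ => ∃ (G K : Type u) (_ : AddCommGroup G) (_ : Module R G)
      (_ : AddCommGroup K) (_ : Module R K) (f : K →ₗ[R] G) (g : G →ₗ[R] M),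
      IsTotallyCReflexive R C G ∧ Function.Injective f ∧ Function.Surjective g ∧
      LinearMap.range f = LinearMap.ker g ∧ gcDimLE C n K

/-- `M` has finite `G_C`-dimension. -/
def HasFiniteGCDim (C M : Type u) [AddCommGroup C] [Module R C]
    [AddCommGroup M] [Module R M] : Prop :=
  ∃ n : ℕ, gcDimLE R C n M

/-- A finitely generated module over a local ring is Cohen-Macaulay if its depth
equals its Krull dimension. -/
def IsCohenMacaulayModule [IsLocalRing R] (M : Type u) [AddCommGroup M] [Module R M] : Prop :=
  Module.Finite R M ∧ (depth R M : WithBot ℕ∞) = Order.krullDim (Module.support R M)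

/-- The `S`-module structure on `Hom_R(S, M)` through the domain, for an `R`-algebra `S`. -/
instance homDomModule (S : Type u) [CommRing S] [Algebra R S]
    (M : Type u) [AddCommGroup M] [Module R M] : Module S (S →ₗ[R] M) where
  smul s f := f.comp (LinearMap.mul R S s)
  one_smul f := by ext x; show f (1 * x) = f x; rw [one_mul]
  mul_smul s t f := by ext x; show f (s * t * x) = f (t * (s * x)); ring_nf
  smul_zero s := by ext x; rfl
  smul_add s f g := by ext x; rfl
  add_smul s t f := by
    ext x; show f ((s + t) * x) = f (s * x) + f (t * x); rw [add_mul, map_add]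
  zero_smul f := by ext x; show f (0 * x) = 0; rw [zero_mul, map_zero]

/-- The Bass number `μ^i(p, M) = dim_{k(p)} Ext^i_{R_p}(k(p), M_p)`. -/
noncomputable def bassNumber (p : Ideal R) [p.IsPrime] (i : ℕ)
    (M : Type u) [AddCommGroup M] [Module R M] : ℕ∞ :=
  mLength (Localization.AtPrime p)
    (extM (Localization.AtPrime p) (IsLocalRing.ResidueField (Localization.AtPrime p))
      (LocalizedModule p.primeCompl M) i)

/-- The dual Bass number `π_i(p, M) = dim_{k(p)} Tor_i^{R_p}(k(p), Hom_R(R_p, M))`. -/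
noncomputable def dualBassNumber (p : Ideal R) [p.IsPrime] (i : ℕ)
    (M : Type u) [AddCommGroup M] [Module R M] : ℕ∞ :=
  mLength (Localization.AtPrime p)
    (torM (Localization.AtPrime p) (IsLocalRing.ResidueField (Localization.AtPrime p))
      (Localization.AtPrime p →ₗ[R] M) i)

/-- A cotorsion module: `Ext^1_R(F, M) = 0` for every flat module `F`. -/
def IsCotorsion (M : Type u) [AddCommGroup M] [Module R M] : Prop :=
  ∀ (F : Type u) (_ : AddCommGroup F) (_ : Module R F), Module.Flat R F →
    Subsingleton (extM R F M 1)

/-- A `C`-flat module: one isomorphic to `C ⊗_R F` with `F` flat. -/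
def IsCFlat (C M : Type u) [AddCommGroup C] [Module R C] [AddCommGroup M] [Module R M] : Prop :=
  ∃ (F : Type u) (_ : AddCommGroup F) (_ : Module R F), Module.Flat R F ∧
    Nonempty (M ≃ₗ[R] TensorProduct R C F)

/-- A `C`-injective module: one isomorphic to `Hom_R(C, I)` with `I` injective. -/
def IsCInjective (C M : Type u) [AddCommGroup C] [Module R C]
    [AddCommGroup M] [Module R M] : Prop :=
  ∃ (I : Type u) (_ : AddCommGroup I) (_ : Module R I), Module.Injective R I ∧
    Nonempty (M ≃ₗ[R] (C →ₗ[R] I))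

/-- `φ : F → M` is a flat cover of `M`. -/
def IsFlatCover (M F : Type u) [AddCommGroup M] [Module R M] [AddCommGroup F] [Module R F]
    (φ : F →ₗ[R] M) : Prop :=
  Module.Flat R F ∧
  (∀ (G : Type u) (_ : AddCommGroup G) (_ : Module R G), Module.Flat R G →
    ∀ ψ : G →ₗ[R] M, ∃ h : G →ₗ[R] F, φ.comp h = ψ) ∧
  (∀ ψ : F →ₗ[R] F, φ.comp ψ = φ → Function.Bijective ψ)

/-- `E` is an injective hull of `N`: `E` is injective and contains `N` as an
essential submodule. -/
def IsInjectiveHull (N E : Type u) [AddCommGroup N] [Module R N]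
    [AddCommGroup E] [Module R E] : Prop :=
  Module.Injective R E ∧ ∃ ι : N →ₗ[R] E, Function.Injective ι ∧
    ∀ K : Submodule R E, K ≠ ⊥ → K ⊓ LinearMap.range ι ≠ ⊥

end

/-! ### Comparison of derived-functor Ext with Yoneda-type Ext -/

section Helpers

variable {R : Type u} [CommRing R]

open CochainComplex HomComplex in
/-- In degree zero there are no coboundaries: a cocycle on the degree zero term of a projective
resolution represents the zero class only if it is zero. -/
lemma extMk_zero_eq_zero_iff {A : Type*} [Category A] [Abelian A] [HasExt.{u} A]
    {X Y : A} (P : ProjectiveResolution X) (f : P.complex.X 0 ⟶ Y)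
    (hf : P.complex.d 1 0 ≫ f = 0) :
    P.extMk f 1 rfl hf = 0 ↔ f = 0 := by
  refine ⟨fun h ↦ ?_, fun h ↦ by subst h; simp⟩
  rw [← P.extEquivCohomologyClass.apply_eq_iff_eq,
    ProjectiveResolution.extEquivCohomologyClass_extMk,
    ProjectiveResolution.extEquivCohomologyClass_zero, CohomologyClass.mk_eq_zero_iff,
    Cocycle.toSingleMk_mem_coboundaries_iff _ _ _ _ _ 1 (by simp)] at h
  obtain ⟨g, hg⟩ := h
  have h0 : P.cochainComplex.d (-((0 : ℕ) : ℤ)) 1 = 0 :=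
    (P.cochainComplex.isZero_of_isStrictlyLE 0 1 (by simp)).eq_of_tgt _ _
  rw [h0, Limits.zero_comp] at hg
  rw [← cancel_epi (P.cochainComplexXIso (-((0 : ℕ) : ℤ)) 0 rfl).hom, ← hg, Limits.comp_zero]

lemma smul_extMk {X Y : ModuleCat.{u} R} (P : ProjectiveResolution X) {n : ℕ}
    (r : R) (f : P.complex.X n ⟶ Y) (hf : P.complex.d (n + 1) n ≫ f = 0) :
    r • P.extMk f (n + 1) rfl hf = P.extMk (r • f) (n + 1) rfl (by simp [hf]) := by
  rw [Abelian.Ext.smul_eq_comp_mk₀, ProjectiveResolution.extMk_comp_mk₀]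
  simp

/-- The map sending an `n`-cocycle of `Hom(P, Y)`, for a projective resolution `P` of `X`, to its
class in `Ext^n(X, Y)`. -/
noncomputable def extMkLinear {X : ModuleCat.{u} R} (P : ProjectiveResolution X)
    (Y : ModuleCat.{u} R) (n : ℕ) :
    LinearMap.ker ((P.complex.linearYonedaObj R Y).d n (n + 1)).hom →ₗ[R] Abelian.Ext X Y n where
  toFun f := P.extMk f.1 (n + 1) rfl f.2
  map_add' f g := (P.add_extMk (Y := Y) f.1 g.1 (n + 1) rfl f.2 g.2).symm
  map_smul' r f := (smul_extMk (Y := Y) P r f.1 f.2).symm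

/-- The Ext modules defined through derived functors agree, `R`-linearly, with those defined
through the derived category, for which long exact sequences are available. -/
theorem nonempty_extM_equiv (M N : Type u) [AddCommGroup M] [Module R M]
    [AddCommGroup N] [Module R N] (n : ℕ) :
    Nonempty (extM R M N n ≃ₗ[R] Abelian.Ext (ModuleCat.of R M) (ModuleCat.of R N) n) := by
  let P := ProjectiveResolution.of (ModuleCat.of R M)
  let Y := ModuleCat.of R N
  let K := P.complex.linearYonedaObj R Y
  let S := K.sc' ((ComplexShape.up ℕ).prev n) n (n + 1)
  let e₁ : extM R M N n ≅ S.homology := P.isoExt n Y ≪≫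
    (ShortComplex.homologyMapIso (K.isoSc' _ n (n + 1) rfl (by simp)))
  let e₂ := (e₁ ≪≫ S.moduleCatHomologyIso).toLinearEquiv
  let φ : LinearMap.ker S.g.hom →ₗ[R] Abelian.Ext (ModuleCat.of R M) Y n := extMkLinear P Y n
  have hφ : Function.Surjective φ := fun α ↦ by
    obtain ⟨f, hf, h⟩ := P.extMk_surjective α (n + 1) rfl
    exact ⟨⟨f, hf⟩, h⟩
  have hker : LinearMap.range S.moduleCatToCycles = LinearMap.ker φ := by
    ext ⟨f, hf⟩
    rw [LinearMap.mem_ker]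
    change _ ↔ P.extMk f (n + 1) rfl hf = 0
    cases n with
    | zero =>
      refine Iff.trans ?_ (extMk_zero_eq_zero_iff (Y := Y) P f hf).symm
      have h0 : S.f = 0 := K.shape _ _ (by simp)
      constructor
      · rintro ⟨g, hg⟩
        have h1 : S.f.hom g = f := congrArg Subtype.val hg
        have h2 : S.f.hom g = 0 := by rw [h0]; rfl
        exact h1.symm.trans h2
      · rintro rfl
        exact ⟨0, map_zero _⟩
    | succ p =>
      have hp : (ComplexShape.up ℕ).prev (p + 1) = p := by simp
      refine Iff.trans ?_ (P.extMk_eq_zero_iff (Y := Y) f (p + 1 + 1) rfl hf p rfl).symm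
      have key : ∀ q (hq : q = p), (∃ g : P.complex.X q ⟶ Y, P.complex.d (p + 1) q ≫ g = f) ↔
          (∃ g : P.complex.X p ⟶ Y, P.complex.d (p + 1) p ≫ g = f) := by
        rintro q rfl; rfl
      refine Iff.trans ?_ (key _ hp)
      constructor
      · rintro ⟨g, hg⟩
        exact ⟨g, congrArg Subtype.val hg⟩
      · rintro ⟨g, hg⟩
        exact ⟨g, Subtype.ext hg⟩
  exact ⟨e₂ ≪≫ₗ Submodule.quotEquivOfEq _ _ hker ≪≫ₗ φ.quotKerEquivOfSurjective hφ⟩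

/-! ### Formal properties of Ext in the first variable -/

/-- `Ext^i(M^ι, Y) = Ext^i(M, Y)^ι` for finite `ι`, by restriction to the summands. -/
noncomputable def extPiEquiv {ι : Type} [Fintype ι] [DecidableEq ι] (M : Type u) [AddCommGroup M]
    [Module R M] (Y : ModuleCat.{u} R) (i : ℕ) :
    Abelian.Ext (ModuleCat.of R (ι → M)) Y i ≃ₗ[R] (ι → Abelian.Ext (ModuleCat.of R M) Y i) where
  toFun x a := (Abelian.Ext.mk₀ (ModuleCat.ofHom (LinearMap.single R (fun _ : ι ↦ M) a))).comp x
    (zero_add i)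
  map_add' x y := by ext a; simp
  map_smul' r x := by ext a; simp
  invFun y := ∑ a, (Abelian.Ext.mk₀ (ModuleCat.ofHom (LinearMap.proj (φ := fun _ : ι ↦ M) a))).comp
    (y a) (zero_add i)
  left_inv x := by
    have h : ∑ a, ModuleCat.ofHom (LinearMap.proj (R := R) (φ := fun _ : ι ↦ M) a) ≫
        ModuleCat.ofHom (LinearMap.single R (fun _ : ι ↦ M) a) =
        𝟙 (ModuleCat.of R (ι → M)) := by
      ext v b
      simp [Pi.single_apply]
    have h' : ∀ a, (Abelian.Ext.mk₀ (ModuleCat.ofHom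
          (LinearMap.proj (R := R) (φ := fun _ : ι ↦ M) a))).comp
        ((Abelian.Ext.mk₀ (ModuleCat.ofHom (LinearMap.single R (fun _ : ι ↦ M) a))).comp x
          (zero_add i)) (zero_add i) =
        (Abelian.Ext.mk₀ (ModuleCat.ofHom (LinearMap.proj (R := R) (φ := fun _ : ι ↦ M) a) ≫
          ModuleCat.ofHom (LinearMap.single R (fun _ : ι ↦ M) a))).comp x (zero_add i) :=
      fun a ↦ Abelian.Ext.mk₀_comp_mk₀_assoc _ _ _
    refine (Finset.sum_congr rfl fun a _ ↦ h' a).trans ?_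
    rw [← Abelian.Ext.sum_comp, ← Abelian.Ext.mk₀_sum, h, Abelian.Ext.mk₀_id_comp]
  right_inv y := by
    ext a
    dsimp only
    rw [Abelian.Ext.comp_sum, Finset.sum_eq_single a]
    · rw [Abelian.Ext.mk₀_comp_mk₀_assoc, ← ModuleCat.ofHom_comp,
        LinearMap.proj_comp_single_same, ModuleCat.ofHom_id, Abelian.Ext.mk₀_id_comp]
    · intro b _ hb
      rw [Abelian.Ext.mk₀_comp_mk₀_assoc, ← ModuleCat.ofHom_comp,
        LinearMap.proj_comp_single_ne R _ b a hb, ModuleCat.ofHom_zero, Abelian.Ext.mk₀_zero,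
        Abelian.Ext.zero_comp]
    · simp

/-- Precomposition with an isomorphism `X ≅ X'`, on Ext. -/
noncomputable def extEquivOfEquiv {X X' : ModuleCat.{u} R} (e : X ≅ X') (Y : ModuleCat.{u} R)
    (i : ℕ) : Abelian.Ext X' Y i ≃ₗ[R] Abelian.Ext X Y i where
  __ := (Abelian.Ext.mk₀ e.hom).precompOfLinear R Y (zero_add i)
  invFun x := (Abelian.Ext.mk₀ e.inv).comp x (zero_add i)
  left_inv x := by
    change (Abelian.Ext.mk₀ e.inv).comp ((Abelian.Ext.mk₀ e.hom).comp x (zero_add i)) (zero_add i) = _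
    simp
  right_inv x := by 
    change (Abelian.Ext.mk₀ e.hom).comp ((Abelian.Ext.mk₀ e.inv).comp x (zero_add i)) (zero_add i) = _
    simp

/-- Dimension shifting along the connecting map. -/
lemma nonempty_ext_equiv_of_middle {S : ShortComplex (ModuleCat.{u} R)} (hS : S.ShortExact)
    (Y : ModuleCat.{u} R) (i : ℕ) [Subsingleton (Abelian.Ext S.X₂ Y i)]
    [Subsingleton (Abelian.Ext S.X₂ Y (i + 1))] :
    Nonempty (Abelian.Ext S.X₁ Y i ≃ₗ[R] Abelian.Ext S.X₃ Y (i + 1)) := by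
  refine ⟨LinearEquiv.ofBijective (hS.extClass.precompOfLinear R Y (add_comm 1 i)) ⟨?_, ?_⟩⟩
  · rw [injective_iff_map_eq_zero]
    intro x hx
    obtain ⟨y, rfl⟩ := Abelian.Ext.contravariant_sequence_exact₁ hS Y x (add_comm 1 i) hx
    rw [Subsingleton.elim y 0, Abelian.Ext.comp_zero]
  · intro x
    exact Abelian.Ext.contravariant_sequence_exact₃ hS Y x (Subsingleton.elim _ _) (add_comm 1 i)

lemma nonempty_ext_equiv_of_left {S : ShortComplex (ModuleCat.{u} R)} (hS : S.ShortExact)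
    (Y : ModuleCat.{u} R) (i : ℕ) [Subsingleton (Abelian.Ext S.X₁ Y i)]
    [Subsingleton (Abelian.Ext S.X₁ Y (i + 1))] :
    Nonempty (Abelian.Ext S.X₃ Y (i + 1) ≃ₗ[R] Abelian.Ext S.X₂ Y (i + 1)) := by
  refine ⟨LinearEquiv.ofBijective
    ((Abelian.Ext.mk₀ S.g).precompOfLinear R Y (zero_add (i + 1))) ⟨?_, ?_⟩⟩
  · rw [injective_iff_map_eq_zero]
    intro x hx
    obtain ⟨y, rfl⟩ := Abelian.Ext.contravariant_sequence_exact₃ hS Y x hx (add_comm 1 i)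
    rw [Subsingleton.elim y 0, Abelian.Ext.comp_zero]
  · intro x
    exact Abelian.Ext.contravariant_sequence_exact₂ hS Y x (Subsingleton.elim _ _)

/-- `Ext^0(M, N) = Hom(M, N)`. -/
noncomputable def extZeroEquiv (M N : Type u) [AddCommGroup M] [Module R M]
    [AddCommGroup N] [Module R N] :
    Abelian.Ext (ModuleCat.of R M) (ModuleCat.of R N) 0 ≃ₗ[R] (M →ₗ[R] N) :=
  Abelian.Ext.linearEquiv₀.trans ModuleCat.homLinearEquiv

lemma extZeroEquiv_symm_apply {M N : Type u} [AddCommGroup M] [Module R M]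
    [AddCommGroup N] [Module R N] (f : M →ₗ[R] N) :
    (extZeroEquiv M N).symm f = Abelian.Ext.mk₀ (ModuleCat.ofHom f) := rfl

lemma shortExact_of_exact {K M N : Type u} [AddCommGroup K] [Module R K] [AddCommGroup M]
    [Module R M] [AddCommGroup N] [Module R N] {f : K →ₗ[R] M} {p : M →ₗ[R] N}
    (hf : Function.Injective f) (hfp : Function.Exact f p) (hp : Function.Surjective p) :
    (ModuleCat.shortComplexOfCompEqZero f p hfp.linearMap_comp_eq_zero).ShortExact :=
  ModuleCat.shortComplex_shortExact _ hfp hf hp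

/-- If `0 → K → M → N → 0` is exact and `Ext^1(M, Y) = 0`, then `Ext^1(N, Y)` is the cokernel of
`Hom(M, Y) → Hom(K, Y)`. -/
lemma nonempty_ext_one_equiv {K M N Y : Type u} [AddCommGroup K] [Module R K] [AddCommGroup M]
    [Module R M] [AddCommGroup N] [Module R N] [AddCommGroup Y] [Module R Y]
    {f : K →ₗ[R] M} {p : M →ₗ[R] N} (hf : Function.Injective f) (hfp : Function.Exact f p)
    (hp : Function.Surjective p)
    [Subsingleton (Abelian.Ext (ModuleCat.of R M) (ModuleCat.of R Y) 1)] :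
    Nonempty (((K →ₗ[R] Y) ⧸
        LinearMap.range (f.lcomp R Y)) ≃ₗ[R]
      Abelian.Ext (ModuleCat.of R N) (ModuleCat.of R Y) 1) := by
  have hS := shortExact_of_exact hf hfp hp
  let φ : (K →ₗ[R] Y) →ₗ[R]
      Abelian.Ext (ModuleCat.of R N) (ModuleCat.of R Y) 1 :=
    (hS.extClass.precompOfLinear R (ModuleCat.of R Y) (add_zero 1)) ∘ₗ
      (extZeroEquiv K Y).symm.toLinearMap
  have hφ : Function.Surjective φ := by
    intro x
    obtain ⟨y, hy⟩ := Abelian.Ext.contravariant_sequence_exact₃ hS (ModuleCat.of R Y) x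
      (Subsingleton.elim _ _) (add_zero 1)
    exact ⟨extZeroEquiv K Y y, by simpa [φ] using hy⟩
  have hr : LinearMap.range (f.lcomp R Y) = LinearMap.ker φ := by
    ext h
    rw [LinearMap.mem_ker]
    have hφh : φ h = hS.extClass.comp (Abelian.Ext.mk₀ (ModuleCat.ofHom h)) (add_zero 1) := rfl
    have hg (g : M →ₗ[R] Y) : (Abelian.Ext.mk₀ (ModuleCat.ofHom f)).comp
        (Abelian.Ext.mk₀ (ModuleCat.ofHom g)) (zero_add 0) =
        Abelian.Ext.mk₀ (ModuleCat.ofHom (f.lcomp R Y g)) :=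
      Abelian.Ext.mk₀_comp_mk₀ _ _
    rw [hφh]
    constructor
    · rintro ⟨g, rfl⟩
      rw [← hg]
      exact hS.extClass_comp_assoc (Abelian.Ext.mk₀ (ModuleCat.ofHom g))
    · intro h0
      obtain ⟨y, hy⟩ := Abelian.Ext.contravariant_sequence_exact₁ hS (ModuleCat.of R Y)
        (Abelian.Ext.mk₀ (ModuleCat.ofHom h)) (add_zero 1) h0
      obtain ⟨g, rfl⟩ := (extZeroEquiv M Y).symm.surjective y
      refine ⟨g, (extZeroEquiv K Y).symm.injective ?_⟩
      rw [extZeroEquiv_symm_apply, extZeroEquiv_symm_apply, ← hg]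
      exact hy
  exact ⟨Submodule.quotEquivOfEq _ _ hr ≪≫ₗ φ.quotKerEquivOfSurjective hφ⟩

open TensorProduct

/-! ### Modules on which the maximal ideal acts through free modules -/

lemma lcomp_bijective {A B Y : Type u} [AddCommGroup A] [Module R A] [AddCommGroup B] [Module R B]
    [AddCommGroup Y] [Module R Y] {q : A →ₗ[R] B} (hq : Function.Surjective q)
    [Subsingleton (LinearMap.ker q →ₗ[R] Y)] : Function.Bijective (q.lcomp R Y) := by
  refine ⟨fun f g hfg ↦ ?_, fun f ↦ ?_⟩
  · ext v
    obtain ⟨w, rfl⟩ := hq v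
    exact LinearMap.congr_fun hfg w
  · have hf : LinearMap.ker q ≤ LinearMap.ker f := fun v hv ↦
      LinearMap.congr_fun (Subsingleton.elim (f ∘ₗ (LinearMap.ker q).subtype) 0) ⟨v, hv⟩
    refine ⟨(LinearMap.ker q).liftQ f hf ∘ₗ (q.quotKerEquivOfSurjective hq).symm, ?_⟩
    ext1 v
    have : (q.quotKerEquivOfSurjective hq).symm (q v) = Submodule.Quotient.mk v := by
      rw [LinearEquiv.symm_apply_eq]; rfl
    simp [this]

section Local

variable [IsLocalRing R]

local notation "𝓀" => IsLocalRing.ResidueField R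

lemma exists_equiv_pi_residueField (T : Type u) [AddCommGroup T] [Module R T] [Module.Finite R T]
    (hT : ∀ x ∈ IsLocalRing.maximalIdeal R, ∀ t : T, x • t = 0) :
    ∃ n : ℕ, Nonempty (T ≃ₗ[R] (Fin n → 𝓀)) := by
  have h : Module.IsTorsionBySet R T (IsLocalRing.maximalIdeal R : Set R) :=
    fun t x ↦ hT x.1 x.2 t
  let : Module 𝓀 T := h.module
  have : IsScalarTower R 𝓀 T := h.isScalarTower
  have : Module.Finite 𝓀 T := Module.Finite.of_restrictScalars_finite R 𝓀 T
  exact ⟨_, ⟨(Module.finBasis 𝓀 T).equivFun.restrictScalars R⟩⟩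

lemma subsingleton_ext_of_smul_eq_zero {T : Type u} [AddCommGroup T] [Module R T]
    [Module.Finite R T] (hT : ∀ x ∈ IsLocalRing.maximalIdeal R, ∀ t : T, x • t = 0)
    (Y : ModuleCat.{u} R) (i : ℕ) [Subsingleton (Abelian.Ext (ModuleCat.of R 𝓀) Y i)] :
    Subsingleton (Abelian.Ext (ModuleCat.of R T) Y i) := by
  obtain ⟨n, ⟨e⟩⟩ := exists_equiv_pi_residueField T hT
  exact ((extEquivOfEquiv e.symm.toModuleIso Y i).trans (extPiEquiv 𝓀 Y i)).toEquiv.subsingleton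

variable (R) in
/-- Multiplication on `N` by any element of the maximal ideal factors through a finite free module.
This holds for the residue field and passes to syzygies; it makes the maximal ideal annihilate
all `Tor_i(N, -)` with `i > 0`. -/
def MaxIdealFactorsThroughFree (N : Type u) [AddCommGroup N] [Module R N] : Prop :=
  ∀ x ∈ IsLocalRing.maximalIdeal R, ∃ (n : ℕ) (a : N →ₗ[R] (Fin n → R)) (b : (Fin n → R) →ₗ[R] N),
    ∀ v, b (a v) = x • v

/-- For `0 → K → F → N → 0` exact with `F` free and `x` in the maximal ideal, multiplication by `x`
on `K` extends to `F`: if `b ∘ a = x` on `N` and `b'` lifts `b` to `F`, then `x - b' ∘ a ∘ p` maps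
`F` into `K`. -/
lemma MaxIdealFactorsThroughFree.exists_retraction {K N : Type u} [AddCommGroup K] [Module R K]
    [AddCommGroup N] [Module R N] (hN : MaxIdealFactorsThroughFree R N) {n : ℕ}
    {f : K →ₗ[R] (Fin n → R)} {p : (Fin n → R) →ₗ[R] N} (hf : Function.Injective f)
    (hfp : Function.Exact f p) (hp : Function.Surjective p)
    {x : R} (hx : x ∈ IsLocalRing.maximalIdeal R) :
    ∃ h : (Fin n → R) →ₗ[R] K, ∀ v, h (f v) = x • v := by
  obtain ⟨m, a, b, hab⟩ := hN x hx
  obtain ⟨b', hb'⟩ := Module.projective_lifting_property p b hp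
  have hb (w) : p (b' w) = b w := LinearMap.congr_fun hb' w
  let g : (Fin n → R) →ₗ[R] LinearMap.range f :=
    LinearMap.codRestrict _ (x • LinearMap.id - b' ∘ₗ a ∘ₗ p) fun w ↦ (hfp _).1 (by simp [hb, hab])
  refine ⟨(LinearEquiv.ofInjective f hf).symm ∘ₗ g, fun v ↦ ?_⟩
  change (LinearEquiv.ofInjective f hf).symm (g (f v)) = _
  rw [LinearEquiv.symm_apply_eq]
  ext1
  rw [LinearEquiv.ofInjective_apply, map_smul]
  change x • f v - b' (a (p (f v))) = x • f v
  simp [hfp.apply_apply_eq_zero]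

lemma MaxIdealFactorsThroughFree.of_exact {K N : Type u} [AddCommGroup K] [Module R K]
    [AddCommGroup N] [Module R N] (hN : MaxIdealFactorsThroughFree R N) {n : ℕ}
    {f : K →ₗ[R] (Fin n → R)} {p : (Fin n → R) →ₗ[R] N} (hf : Function.Injective f)
    (hfp : Function.Exact f p) (hp : Function.Surjective p) : MaxIdealFactorsThroughFree R K := by
  intro x hx
  obtain ⟨h, hh⟩ := hN.exists_retraction hf hfp hp hx
  exact ⟨n, f, h, hh⟩

/-- The maximal ideal annihilates `Tor_1(N, C)`, seen as the kernel of `K ⊗ C → F ⊗ C`. -/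
lemma MaxIdealFactorsThroughFree.smul_eq_zero {K N : Type u} [AddCommGroup K] [Module R K]
    [AddCommGroup N] [Module R N] (hN : MaxIdealFactorsThroughFree R N) {n : ℕ}
    {f : K →ₗ[R] (Fin n → R)} {p : (Fin n → R) →ₗ[R] N} (hf : Function.Injective f)
    (hfp : Function.Exact f p) (hp : Function.Surjective p)
    (C : Type u) [AddCommGroup C] [Module R C]
    {x : R} (hx : x ∈ IsLocalRing.maximalIdeal R) (t : K ⊗[R] C)
    (ht : f.rTensor C t = 0) : x • t = 0 := by
  obtain ⟨h, hh⟩ := hN.exists_retraction hf hfp hp hx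
  have h1 : h ∘ₗ f = x • LinearMap.id := LinearMap.ext hh
  have h2 := congrArg (h.rTensor C) ht
  rw [← LinearMap.comp_apply, ← LinearMap.rTensor_comp, h1, LinearMap.rTensor_smul] at h2
  simpa using h2

lemma maxIdealFactorsThroughFree_residueField : MaxIdealFactorsThroughFree R 𝓀 := by
  intro x hx
  refine ⟨0, 0, 0, fun v ↦ ?_⟩
  rw [Algebra.smul_def, IsLocalRing.ResidueField.algebraMap_eq,
    (IsLocalRing.residue_eq_zero_iff x).2 hx]
  simp

end Local

/-! ### Comparison of `Ext(N, R)` with `Ext(N ⊗ C, C)` -/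

section Semidualizing

variable {C : Type u} [AddCommGroup C] [Module R C]

/-- The homothety isomorphism `R ≃ Hom(C, C)` of a semidualizing module. -/
noncomputable def homothetyEquiv (hC : IsSemidualizing R C) : R ≃ₗ[R] (C →ₗ[R] C) :=
  LinearEquiv.ofBijective (LinearMap.toSpanSingleton R (C →ₗ[R] C) LinearMap.id) hC.2.1

/-- `Hom(N, R) ≃ Hom(N, Hom(C, C)) ≃ Hom(N ⊗ C, C)`, by homothety and adjunction. -/
noncomputable def homTensorEquiv (hC : IsSemidualizing R C) (N : Type u) [AddCommGroup N] [Module R N] :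
    (N →ₗ[R] R) ≃ₗ[R] (N ⊗[R] C →ₗ[R] C) :=
  (LinearEquiv.congrRight (homothetyEquiv hC)).trans
    (TensorProduct.lift.equiv (RingHom.id R) N C C)

lemma homTensorEquiv_comp (hC : IsSemidualizing R C) {M N : Type u} [AddCommGroup M] [Module R M]
    [AddCommGroup N] [Module R N] (f : M →ₗ[R] N) (ψ : N →ₗ[R] R) :
    homTensorEquiv hC M (ψ ∘ₗ f) = homTensorEquiv hC N ψ ∘ₗ f.rTensor C := by
  ext
  rfl

lemma subsingleton_ext_pi_tensor (hC : IsSemidualizing R C) (n i : ℕ) :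
    Subsingleton (Abelian.Ext (ModuleCat.of R ((Fin n → R) ⊗[R] C)) (ModuleCat.of R C) (i + 1)) := by
  have h1 : Subsingleton (extM R C C (i + 1)) := hC.2.2 _ i.succ_pos
  obtain ⟨e⟩ := nonempty_extM_equiv (R := R) C C (i + 1)
  have h2 : Subsingleton (Abelian.Ext (ModuleCat.of R C) (ModuleCat.of R C) (i + 1)) :=
    e.symm.toEquiv.subsingleton
  let e' : (Fin n → R) ⊗[R] C ≃ₗ[R] (Fin n → C) :=
    (TensorProduct.comm R _ _).trans (TensorProduct.piScalarRight R R C (Fin n))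
  exact ((extEquivOfEquiv e'.symm.toModuleIso (ModuleCat.of R C) (i + 1)).trans
    (extPiEquiv C (ModuleCat.of R C) (i + 1))).toEquiv.subsingleton

lemma subsingleton_ext_pi (n i : ℕ) (Y : ModuleCat.{u} R) :
    Subsingleton (Abelian.Ext (ModuleCat.of R (Fin n → R)) Y (i + 1)) :=
  Abelian.Ext.subsingleton_of_projective _ _ _

variable [IsLocalRing R] [IsNoetherianRing R]

local notation "𝓀" => IsLocalRing.ResidueField R

/-- If `Ext^j(k, C) = 0` for `j < i`, then `Ext^i(N, R) ≃ Ext^i(N ⊗ C, C)` for every finite `N` on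
which the maximal ideal acts through free modules. With `0 → K → F → N → 0` exact and `F` free, the
kernel `L` of `F ⊗ C → N ⊗ C` is the quotient of `K ⊗ C` by a finite module killed by the maximal
ideal, hence invisible to Ext into `C` in degrees below `i`; dimension shifting then reduces
the claim for `N` to the claim for `K`. -/
theorem nonempty_ext_equiv_ext_tensor (hC : IsSemidualizing R C) (i : ℕ)
    (hk : ∀ j < i, Subsingleton (Abelian.Ext (ModuleCat.of R 𝓀) (ModuleCat.of R C) j))
    (N : Type u) [AddCommGroup N] [Module R N] [Module.Finite R N]
    (hN : MaxIdealFactorsThroughFree R N) :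
    Nonempty (Abelian.Ext (ModuleCat.of R N) (ModuleCat.of R R) i ≃ₗ[R]
      Abelian.Ext (ModuleCat.of R (N ⊗[R] C)) (ModuleCat.of R C) i) := by
  induction i generalizing N with
  | zero =>
    exact ⟨(extZeroEquiv N R).trans ((homTensorEquiv hC N).trans (extZeroEquiv (N ⊗[R] C) C).symm)⟩
  | succ i ih =>
    have : Module.Finite R C := hC.1
    obtain ⟨n, p, hp⟩ := Module.Finite.exists_fin' R N
    -- The kernel is treated as an abstract module: on `↥(ker p) ⊗ C` instance search does not
    -- identify the additive structure of `↥(ker p)` as coming from a group.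
    obtain ⟨K, _, _, f, hf, hfp⟩ : ∃ (K : Type u) (_ : AddCommGroup K) (_ : Module R K)
        (f : K →ₗ[R] (Fin n → R)), Function.Injective f ∧ Function.Exact f p :=
      ⟨LinearMap.ker p, inferInstance, inferInstance, (LinearMap.ker p).subtype,
        Subtype.val_injective, LinearMap.exact_subtype_ker_map p⟩
    have : Module.Finite R K := Module.Finite.of_injective f hf
    have hK := hN.of_exact hf hfp hp
    have hpC : Function.Surjective (p.rTensor C) := LinearMap.rTensor_surjective C hp
    have hex : Function.Exact (f.rTensor C) (p.rTensor C) := rTensor_exact C hfp hp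
    obtain ⟨L, _, _, l, q, hl, hlp, hq, hlq⟩ : ∃ (L : Type u) (_ : AddCommGroup L)
        (_ : Module R L) (l : L →ₗ[R] (Fin n → R) ⊗[R] C) (q : K ⊗[R] C →ₗ[R] L),
        Function.Injective l ∧ Function.Exact l (p.rTensor C) ∧ Function.Surjective q ∧
        ∀ v, l (q v) = f.rTensor C v :=
      ⟨LinearMap.ker (p.rTensor C), inferInstance, inferInstance, Submodule.subtype _,
        LinearMap.codRestrict _ (f.rTensor C) fun v ↦ (hex _).2 ⟨v, rfl⟩,
        Subtype.val_injective, LinearMap.exact_subtype_ker_map _, fun v ↦ by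
          obtain ⟨w, hw⟩ := (hex v.1).1 v.2
          exact ⟨w, Subtype.ext hw⟩, fun _ ↦ rfl⟩
    have hT : ∀ j < i + 1, Subsingleton
        (Abelian.Ext (ModuleCat.of R (LinearMap.ker q)) (ModuleCat.of R C) j) := fun j hj ↦ by
      have := hk j hj
      refine subsingleton_ext_of_smul_eq_zero (fun x hx t ↦ Subtype.ext ?_) _ _
      exact hN.smul_eq_zero hf hfp hp C hx t.1 (by rw [← hlq, t.2, map_zero])
    have := hT i i.lt_succ_self
    have hFC := subsingleton_ext_pi_tensor hC n
    have hF := fun i ↦ subsingleton_ext_pi n i (ModuleCat.of R R)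
    cases i with
    | zero =>
      -- Both `Ext^1` are cokernels of maps into `Hom(K, R) ≃ Hom(K ⊗ C, C) ≃ Hom(L, C)`.
      have := hFC 0
      have := hF 0
      obtain ⟨e₁⟩ := nonempty_ext_one_equiv (Y := R) hf hfp hp
      obtain ⟨e₂⟩ := nonempty_ext_one_equiv (Y := C) hl hlp hpC
      have : Subsingleton (LinearMap.ker q →ₗ[R] C) :=
        (extZeroEquiv _ _).symm.toEquiv.subsingleton
      let eq := LinearEquiv.ofBijective (q.lcomp R C) (lcomp_bijective hq)
      let e := (homTensorEquiv hC K).trans eq.symm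
      have hnat (ψ : (Fin n → R) →ₗ[R] R) : e (f.lcomp R R ψ) =
          l.lcomp R C (homTensorEquiv hC _ ψ) := by
        change eq.symm _ = _
        rw [LinearEquiv.symm_apply_eq]
        refine (homTensorEquiv_comp hC f ψ).trans ?_
        refine LinearMap.ext fun v ↦ ?_
        exact congrArg (homTensorEquiv hC _ ψ) (hlq v).symm
      refine ⟨e₁.symm.trans ((Submodule.Quotient.equiv _ _ e ?_).trans e₂)⟩
      ext g
      constructor
      · rintro ⟨_, ⟨ψ, rfl⟩, rfl⟩
        exact ⟨_, (hnat ψ).symm⟩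
      · rintro ⟨g, rfl⟩
        obtain ⟨ψ, rfl⟩ := (homTensorEquiv hC _).surjective g
        exact ⟨_, ⟨ψ, rfl⟩, hnat ψ⟩
    | succ i =>
      have := hT i (by omega)
      have := hFC i
      have := hFC (i + 1)
      have := hF i
      have := hF (i + 1)
      obtain ⟨e₁⟩ := nonempty_ext_equiv_of_middle (shortExact_of_exact hf hfp hp)
        (ModuleCat.of R R) (i + 1)
      obtain ⟨e₂⟩ := ih (fun j hj ↦ hk j (by omega)) K hK
      obtain ⟨e₃⟩ := nonempty_ext_equiv_of_left (LinearMap.shortExact_shortComplexKer hq)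
        (ModuleCat.of R C) i
      obtain ⟨e₄⟩ := nonempty_ext_equiv_of_middle (shortExact_of_exact hl hlp hpC)
        (ModuleCat.of R C) (i + 1)
      exact ⟨e₁.symm.trans (e₂.trans (e₃.symm.trans e₄))⟩

end Semidualizing

/-! ### Types -/

section Final

variable [IsLocalRing R] {C : Type u} [AddCommGroup C] [Module R C]

local notation "𝓀" => IsLocalRing.ResidueField R

lemma exists_residueField_tensor_equiv (hC : IsSemidualizing R C) :
    ∃ n : ℕ, n ≠ 0 ∧ Nonempty (𝓀 ⊗[R] C ≃ₗ[R] (Fin n → 𝓀)) := by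
  have : Module.Finite R C := hC.1
  obtain ⟨n, ⟨e⟩⟩ := exists_equiv_pi_residueField (R := R) (𝓀 ⊗[R] C) fun x hx t ↦ by
    induction t with
    | zero => simp
    | add a b ha hb => rw [smul_add, ha, hb, add_zero]
    | tmul a c =>
      rw [TensorProduct.smul_tmul', Algebra.smul_def, IsLocalRing.ResidueField.algebraMap_eq,
        (IsLocalRing.residue_eq_zero_iff x).2 hx, zero_mul, TensorProduct.zero_tmul]
  refine ⟨n, ?_, ⟨e⟩⟩
  rintro rfl
  have h1 : Subsingleton (𝓀 ⊗[R] C) := e.toEquiv.subsingleton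
  have h2 : Subsingleton C := IsLocalRing.subsingleton_tensorProduct.1 h1
  have h3 : Subsingleton R := (homothetyEquiv hC).toEquiv.subsingleton
  exact not_subsingleton R h3

/-- If `k ⊗ C ≃ k^n`, then `Ext^i(k, R) ≃ Ext^i(k, C)^n` up to and including the first degree in
which the right-hand side does not vanish. -/
lemma nonempty_extM_residueField_equiv [IsNoetherianRing R] (hC : IsSemidualizing R C) {n : ℕ}
    (e : 𝓀 ⊗[R] C ≃ₗ[R] (Fin n → 𝓀)) (i : ℕ)
    (hk : ∀ j < i, Subsingleton (extM R 𝓀 C j)) :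
    Nonempty (extM R 𝓀 R i ≃ₗ[R] (Fin n → extM R 𝓀 C i)) := by
  obtain ⟨e₁⟩ := nonempty_ext_equiv_ext_tensor hC i (fun j hj ↦ by
    have := hk j hj
    obtain ⟨e⟩ := nonempty_extM_equiv (R := R) 𝓀 C j
    exact e.symm.toEquiv.subsingleton) 𝓀 maxIdealFactorsThroughFree_residueField
  obtain ⟨e₂⟩ := nonempty_extM_equiv (R := R) 𝓀 R i
  obtain ⟨e₃⟩ := nonempty_extM_equiv (R := R) 𝓀 C i
  exact ⟨e₂.trans (e₁.trans (((extEquivOfEquiv e.symm.toModuleIso (ModuleCat.of R C) i).trans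
    (extPiEquiv 𝓀 (ModuleCat.of R C) i)).trans (LinearEquiv.piCongrRight fun _ ↦ e₃.symm)))⟩

/-- `r(R) = n * r(C)`, where `n` is the minimal number of generators of `C`. -/
lemma rtype_self_eq_mul [IsNoetherianRing R] (hC : IsSemidualizing R C) {n : ℕ} (hn : n ≠ 0)
    (e : 𝓀 ⊗[R] C ≃ₗ[R] (Fin n → 𝓀)) : rtype R R = n * rtype R C := by
  have : NeZero n := ⟨hn⟩
  have hlt : ∀ i, (∀ j < i, Subsingleton (extM R 𝓀 C j)) →
      (Nontrivial (extM R 𝓀 R i) ↔ Nontrivial (extM R 𝓀 C i)) := fun i hi ↦ by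
    obtain ⟨e'⟩ := nonempty_extM_residueField_equiv hC e i hi
    refine ⟨fun h ↦ ?_, fun h ↦ e'.toEquiv.nontrivial⟩
    by_contra h'
    rw [not_nontrivial_iff_subsingleton] at h'
    exact not_subsingleton _ e'.toEquiv.subsingleton
  have hdepth : depthNat R R = depthNat R C ∧
      ∀ j < depthNat R C, Subsingleton (extM R 𝓀 C j) := by
    have hbelow : ∀ j < depthNat R C, Subsingleton (extM R 𝓀 C j) := fun j hj ↦
      not_nontrivial_iff_subsingleton.1 (Nat.notMem_of_lt_sInf hj)
    refine ⟨?_, hbelow⟩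
    by_cases h : ∃ i, Nontrivial (extM R 𝓀 C i)
    · have hm : Nontrivial (extM R 𝓀 C (depthNat R C)) := Nat.sInf_mem h
      refine le_antisymm (Nat.sInf_le ((hlt _ hbelow).2 hm)) (le_of_not_gt fun hl ↦ ?_)
      have hR : Nontrivial (extM R 𝓀 R (depthNat R R)) :=
        Nat.sInf_mem (s := {i | Nontrivial (extM R 𝓀 R i)}) ⟨_, (hlt _ hbelow).2 hm⟩
      have := (hlt _ fun j hj ↦ hbelow j (hj.trans hl)).1 hR
      exact not_subsingleton _ (hbelow _ hl)
    · -- If all Ext modules for `C` vanish, so do those for `R`, and both depths are `sInf ∅ = 0`.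
      push Not at h
      have hR : ∀ i, ¬ Nontrivial (extM R 𝓀 R i) := fun i hi ↦
        not_subsingleton_iff_nontrivial.2 ((hlt i fun j _ ↦ h j).1 hi) (h i)
      have h1 : {i | Nontrivial (extM R 𝓀 R i)} = {i | Nontrivial (extM R 𝓀 C i)} := by
        ext i
        exact ⟨fun hi ↦ (hR i hi).elim, fun hi ↦ (not_subsingleton_iff_nontrivial.2 hi (h i)).elim⟩
      exact congrArg sInf h1
  obtain ⟨e'⟩ := nonempty_extM_residueField_equiv hC e _ hdepth.2
  unfold rtype mLength
  rw [← Module.length_eq_height, ← Module.length_eq_height, hdepth.1, e'.length_eq,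
    Module.length_pi]
  simp

lemma nonempty_equiv_of_residueField_tensor_equiv (hC : IsSemidualizing R C)
    (e : 𝓀 ⊗[R] C ≃ₗ[R] (Fin 1 → 𝓀)) : Nonempty (C ≃ₗ[R] R) := by
  have : Module.Finite R C := hC.1
  obtain ⟨c, hc⟩ := TensorProduct.mk_surjective R C 𝓀 IsLocalRing.residue_surjective (e.symm 1)
  have htop : Submodule.span R {c} = ⊤ := by
    rw [← IsLocalRing.map_tensorProduct_mk_eq_top, eq_top_iff]
    intro v _
    obtain ⟨r, hr⟩ := IsLocalRing.residue_surjective (e v 0)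
    refine ⟨r • c, Submodule.mem_span_singleton.2 ⟨r, rfl⟩, ?_⟩
    rw [map_smul, hc, ← map_smul, LinearEquiv.symm_apply_eq]
    ext i
    fin_cases i
    simp [← hr, Algebra.smul_def]
  have hsurj : Function.Surjective (LinearMap.toSpanSingleton R C c) := by
    rw [← LinearMap.range_eq_top, LinearMap.range_toSpanSingleton, htop]
  have hinj : Function.Injective (LinearMap.toSpanSingleton R C c) := by
    rw [injective_iff_map_eq_zero]
    intro r hr
    apply (homothetyEquiv hC).injective
    ext v
    obtain ⟨s, rfl⟩ := hsurj v
    rw [LinearMap.toSpanSingleton_apply] at hr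
    change r • s • c = (0 : R) • s • c
    rw [smul_comm, hr, smul_zero, zero_smul]
  exact ⟨(LinearEquiv.ofBijective _ ⟨hinj, hsurj⟩).symm⟩

end Final

end Helpers

/-- For a semidualizing module `C` over a Noetherian local ring `R`, the type
`r_R(C)` divides `r_R(R)`; in particular if `r_R(R) = 1` then `C ≅ R`. -/
theorem semidualizing_rtype_dvd (R : Type u) [CommRing R] [IsNoetherianRing R] [IsLocalRing R]
    (C : Type u) [AddCommGroup C] [Module R C] (hC : IsSemidualizing R C) :
    rtype R C ∣ rtype R R ∧ (rtype R R = 1 → Nonempty (C ≃ₗ[R] R)) := by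
  obtain ⟨n, hn, ⟨e⟩⟩ := exists_residueField_tensor_equiv hC
  have h := rtype_self_eq_mul hC hn e
  refine ⟨Dvd.intro_left _ h.symm, fun h1 ↦ ?_⟩
  have ht : rtype R C ≠ 0 := fun h0 ↦ by simp [h1, h0] at h
  have hle : (n : ℕ∞) ≤ 1 := by
    calc (n : ℕ∞) = n * 1 := (mul_one _).symm
      _ ≤ n * rtype R C := by gcongr; exact Order.one_le_iff_ne_zero.2 ht
      _ = 1 := h.symm.trans h1
  have hle' : n ≤ 1 := by exact_mod_cast hle
  obtain rfl : n = 1 := by omega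
  exact nonempty_equiv_of_residueField_tensor_equiv hC e
end

section
/- Let (R,m) be a commutative Noetherian local ring and let M be a nonzero finitely generated R-module with depth_R(M) = 0. If Ext^1_R(R/m, M) = 0, then R is Artinian and M is an injective R-module. -/
/-!
The vanishing of `Ext¹(k, M)`, where `k = R/𝔪`, says that every homomorphism `𝔪 → M` extends
to `R` (`exists_eq_of_ext_one`), and `depth M = 0` says that `M` has a nonzero element `s`
with `𝔪 s = 0` (`exists_socle_of_ext_zero`).

Extending one element at a time, the first fact yields that a homomorphism `I → M` extends to `R`
as soon as `I` contains a power of `𝔪` (`exists_extension_of_pow_le`): in every step an element `x`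
with `𝔪 x ⊆ I` is adjoined to `I`.

Let `n` be an index at which the ascending chain `(0 :_M 𝔪ⁱ)` becomes stationary. If there were some
`x ∈ 𝔪ⁿ` outside `𝔪ⁿ⁺¹`, then the homomorphism `𝔪ⁿ⁺¹ + R x → M` killing `𝔪ⁿ⁺¹` and sending `x`
to `s` would extend to some `φ : R → M`. Then `φ 1` is killed by `𝔪ⁿ⁺¹`, hence by `𝔪ⁿ`,
so `s = x • φ 1 = 0`, which is absurd. Hence `𝔪ⁿ = 𝔪ⁿ⁺¹`, so `𝔪ⁿ = 0` by Nakayama's lemma and `R` is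
Artinian. Now every ideal contains a power of `𝔪`, and `M` is injective by Baer's criterion.
-/

open CategoryTheory

universe u

open IsLocalRing in
/-- If `Ext⁰(k, M)` is nonzero then so is the socle of `M`. -/
lemma exists_socle_of_ext_zero (R : Type u) [CommRing R] [IsLocalRing R]
    (M : Type u) [AddCommGroup M] [Module R M]
    (h : Nontrivial (extM R (ResidueField R) M 0)) :
    ∃ s : M, s ≠ 0 ∧ ∀ r ∈ maximalIdeal R, r • s = 0 := by
  by_contra! hs
  have P := projectiveResolution (ModuleCat.of R (ResidueField R))
  refine not_subsingleton_iff_nontrivial.mpr h (ModuleCat.subsingleton_of_isZero ?_)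
  refine Limits.IsZero.of_iso ?_ (P.isoExt 0 (ModuleCat.of R M))
  rw [← HomologicalComplex.exactAt_iff_isZero_homology,
    HomologicalComplex.exactAt_iff' _ 0 0 1 (by simp) (by simp),
    ShortComplex.moduleCat_exact_iff]
  intro (φ : P.complex.X 0 ⟶ ModuleCat.of R M) hφ
  replace hφ : P.complex.d 1 0 ≫ φ = 0 := hφ
  refine ⟨0, ?_⟩
  rw [map_zero]
  symm
  change φ = 0
  ext x
  by_contra hx
  -- For `r ∈ 𝔪` the element `r • x` dies in `k`, so it is a boundary and `φ` kills it.
  obtain ⟨r, hr, hne⟩ := hs (φ.hom x) hx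
  apply hne
  have hπ : (P.π.f 0).hom (r • x) = 0 := by
    rw [map_smul]
    generalize (P.π.f 0).hom x = z
    change ResidueField R at z
    change r • z = (0 : ResidueField R)
    rw [Algebra.smul_def, ResidueField.algebraMap_eq, (residue_eq_zero_iff r).mpr hr, zero_mul]
  obtain ⟨q, hq⟩ := (ShortComplex.moduleCat_exact_iff _).mp P.exact₀ (r • x) hπ
  replace hq : (P.complex.d 1 0).hom q = r • x := hq
  rw [← map_smul, ← hq]
  exact congrArg (fun t => t.hom q) hφ

open IsLocalRing in
/-- If `Ext¹(k, M) = 0` then every homomorphism `𝔪 → M` is given by an element of `M`.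
For a projective resolution `P` of `k`, a lift `a : P₀ → R` of `P₀ → k` carries the image of `P₁` into
`𝔪`; composing with `f` gives a `1`-cocycle, and a cochain bounding it provides the extension. -/
lemma exists_eq_of_ext_one (R : Type u) [CommRing R] [IsLocalRing R]
    (M : Type u) [AddCommGroup M] [Module R M]
    (h : Subsingleton (extM R (ResidueField R) M 1)) (f : maximalIdeal R →ₗ[R] M) :
    ∃ y : M, ∀ r : maximalIdeal R, f r = (r : R) • y := by
  have P := projectiveResolution (ModuleCat.of R (ResidueField R))
  have hex : (P.complex.linearYonedaObj R (ModuleCat.of R M)).ExactAt 1 := by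
    rw [HomologicalComplex.exactAt_iff_isZero_homology]
    exact Limits.IsZero.of_iso (@ModuleCat.isZero_of_subsingleton R _ _ h)
      (P.isoExt 1 (ModuleCat.of R M)).symm
  rw [HomologicalComplex.exactAt_iff' _ 0 1 2 (by simp) (by simp),
    ShortComplex.moduleCat_exact_iff] at hex
  let p : ModuleCat.of R R ⟶ ModuleCat.of R (ResidueField R) :=
    ModuleCat.ofHom (Algebra.linearMap R (ResidueField R))
  have : Epi p := (ModuleCat.epi_iff_surjective p).mpr residue_surjective
  have hp (r : R) : p.hom r = 0 ↔ r ∈ maximalIdeal R := residue_eq_zero_iff r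
  let π₀ : P.complex.X 0 ⟶ ModuleCat.of R (ResidueField R) := P.π.f 0
  let a : P.complex.X 0 ⟶ ModuleCat.of R R := Projective.factorThru π₀ p
  have ha : a ≫ p = π₀ := Projective.factorThru_comp _ _
  have ha' (x) : p.hom (a.hom x) = (P.π.f 0).hom x := congrArg (fun t => t.hom x) (ha)
  have hd (q) : a.hom ((P.complex.d 1 0).hom q) ∈ maximalIdeal R := by
    rw [← hp, ha']
    exact congrArg (fun t => t.hom q) (P.complex_d_comp_π_f_zero)
  let g : P.complex.X 1 →ₗ[R] maximalIdeal R :=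
    (a.hom ∘ₗ (P.complex.d 1 0).hom).codRestrict (maximalIdeal R) hd
  have hg (x) : g ((P.complex.d 2 1).hom x) = 0 := by
    ext
    change a.hom ((P.complex.d 1 0).hom ((P.complex.d 2 1).hom x)) = 0
    have : (P.complex.d 1 0).hom ((P.complex.d 2 1).hom x) = 0 :=
      congrArg (fun t => t.hom x) (P.complex.d_comp_d 2 1 0)
    rw [this, map_zero]
  obtain ⟨ψ, hψ⟩ := hex (ModuleCat.ofHom (f ∘ₗ g)) (by
    change P.complex.d 2 1 ≫ ModuleCat.ofHom (f ∘ₗ g) = 0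
    ext x
    change f (g ((P.complex.d 2 1).hom x)) = 0
    rw [hg, map_zero])
  change P.complex.X 0 ⟶ ModuleCat.of R M at ψ
  replace hψ : P.complex.d 1 0 ≫ ψ = ModuleCat.ofHom (f ∘ₗ g) := hψ
  -- The range of `a` is not contained in `𝔪`, so `a` attains the value `1`.
  obtain ⟨e, he⟩ : ∃ e, a.hom e = 1 := by
    obtain ⟨e, he⟩ := (ModuleCat.epi_iff_surjective (P.π.f 0)).mp inferInstance (1 : ResidueField R)
    have hu : IsUnit (a.hom e) := by
      rw [← notMem_maximalIdeal, ← hp, ha', he]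
      exact one_ne_zero
    obtain ⟨v, hv⟩ := hu.exists_left_inv
    exact ⟨v • e, by rw [map_smul]; exact hv⟩
  refine ⟨ψ.hom e, fun r => ?_⟩
  have hr : a.hom ((r : R) • e) = r := by rw [map_smul, he]; exact mul_one _
  have hπ : (P.π.f 0).hom ((r : R) • e) = 0 := by
    rw [← ha', hr]
    exact (hp r).mpr r.2
  obtain ⟨q, hq⟩ := (ShortComplex.moduleCat_exact_iff _).mp P.exact₀ ((r : R) • e) hπ
  replace hq : (P.complex.d 1 0).hom q = (r : R) • e := hq
  have hgq : g q = r := Subtype.ext (by rw [← hr, ← hq]; rfl)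
  rw [← map_smul, ← hq, ← hgq]
  exact (congrArg (fun t => t.hom q) hψ).symm

open IsLocalRing in
/-- If every homomorphism `𝔪 → M` extends to `R`, then so does every homomorphism to `M` from an
ideal containing a power of `𝔪`. -/
lemma exists_extension_of_pow_le (R : Type u) [CommRing R] [IsNoetherianRing R] [IsLocalRing R]
    (M : Type u) [AddCommGroup M] [Module R M]
    (h : ∀ f : maximalIdeal R →ₗ[R] M, ∃ y : M, ∀ r : maximalIdeal R, f r = (r : R) • y)
    (n : ℕ) (I : Ideal R) (hI : maximalIdeal R ^ n ≤ I) (f : I →ₗ[R] M) :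
    ∃ y : M, ∀ r : I, f r = (r : R) • y := by
  induction I using WellFoundedGT.induction with
  | _ I ih =>
  by_cases htop : I = ⊤
  · subst htop
    refine ⟨f ⟨1, trivial⟩, fun r => ?_⟩
    rw [← map_smul]
    congr 1
    ext
    simp
  classical
  -- A minimal power of `𝔪` inside `I` provides an element of the socle of `R ⧸ I`.
  obtain ⟨x, hxI, hx⟩ : ∃ x, x ∉ I ∧ ∀ r ∈ maximalIdeal R, r * x ∈ I := by
    have hex : ∃ n, maximalIdeal R ^ n ≤ I := ⟨n, hI⟩
    obtain ⟨k, hk⟩ : ∃ k, Nat.find hex = k + 1 := by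
      refine Nat.exists_eq_succ_of_ne_zero fun h0 => htop ?_
      have := Nat.find_spec hex
      rw [h0, pow_zero, Ideal.one_eq_top] at this
      exact top_le_iff.mp this
    have hnot : ¬ maximalIdeal R ^ k ≤ I := Nat.find_min hex (by omega)
    obtain ⟨x, hx, hxI⟩ := SetLike.not_le_iff_exists.mp hnot
    refine ⟨x, hxI, fun r hr => ?_⟩
    have hle := Nat.find_spec hex
    rw [hk, pow_succ'] at hle
    exact hle (Ideal.mul_mem_mul hr hx)
  have hmem (c : R) (hc : c * x ∈ I) : c ∈ maximalIdeal R := by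
    rw [mem_maximalIdeal, mem_nonunits_iff]
    intro hu
    exact hxI ((Ideal.unit_mul_mem_iff_mem I hu).mp hc)
  -- Apply the hypothesis to `r ↦ f (r * x)`; the resulting `y` is the value chosen at `x`.
  obtain ⟨y, hy⟩ := h
    { toFun := fun r => f ⟨r * x, hx r r.2⟩
      map_add' := fun r s => by rw [← map_add]; congr 1; ext; simp [add_mul]
      map_smul' := fun r s => by
        rw [RingHom.id_apply, ← map_smul]; congr 1; ext; simp [mul_assoc] }
  replace hy (c : R) (hc : c * x ∈ I) : f ⟨c * x, hc⟩ = c • y := hy ⟨c, hmem c hc⟩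
  let F : R →ₗ.[R] M := ⟨I, f⟩
  let G : R →ₗ.[R] M := LinearPMap.mkSpanSingleton' x y fun c hc => by
    have hc' : c * x ∈ I := by rw [← smul_eq_mul, hc]; exact I.zero_mem
    rw [RingHom.id_apply, ← hy c hc']
    convert map_zero f
    exact hc
  have hFG (u : F.domain) (v : G.domain) (huv : (u : R) = v) : F u = G v := by
    obtain ⟨v, hv⟩ := v
    obtain ⟨c, rfl⟩ := Submodule.mem_span_singleton.mp hv
    change (u : R) = c * x at huv
    rw [LinearPMap.mkSpanSingleton'_apply, RingHom.id_apply, ← hy c (huv ▸ u.2)]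
    exact congrArg f (Subtype.ext huv)
  have hlt : I < I ⊔ Ideal.span {x} := by
    refine lt_of_le_of_ne le_sup_left fun heq => hxI ?_
    rw [heq]
    exact Ideal.mem_sup_right (Ideal.mem_span_singleton_self x)
  obtain ⟨z, hz⟩ := ih _ hlt (hI.trans hlt.le) (F.sup G hFG).toFun
  exact ⟨z, fun r => ((F.left_le_sup G hFG).2 (x := r) (y := ⟨r, hlt.le r.2⟩) rfl).trans (hz _)⟩

open IsLocalRing in
/-- The maximal ideal is nilpotent if `M` has nonzero socle and homomorphisms to `M` extend from
ideals containing a power of `𝔪`: the powers of `𝔪` stop decreasing, and hence vanish, as soon as the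
submodules of `M` they annihilate stop increasing. -/
lemma exists_maximalIdeal_pow_eq_bot (R : Type u) [CommRing R] [IsNoetherianRing R] [IsLocalRing R]
    (M : Type u) [AddCommGroup M] [Module R M] [Module.Finite R M]
    (h : ∀ (n : ℕ) (I : Ideal R), maximalIdeal R ^ n ≤ I → ∀ f : I →ₗ[R] M,
      ∃ y : M, ∀ r : I, f r = (r : R) • y)
    (s : M) (hs0 : s ≠ 0) (hs : ∀ r ∈ maximalIdeal R, r • s = 0) :
    ∃ n, maximalIdeal R ^ n = ⊥ := by
  let T : ℕ →o Submodule R M :=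
    { toFun := fun n => Submodule.torsionBySet R M (maximalIdeal R ^ n : Ideal R)
      monotone' := fun _ _ hij => Submodule.torsionBySet_le_torsionBySet_of_subset
        (Ideal.pow_le_pow_right hij) }
  obtain ⟨n, hn⟩ := monotone_stabilizes_iff_noetherian.mpr (inferInstance : IsNoetherian R M) T
  refine ⟨n, ?_⟩
  suffices hle : maximalIdeal R ^ n ≤ maximalIdeal R ^ (n + 1) by
    refine Submodule.eq_bot_of_le_smul_of_le_jacobson_bot (maximalIdeal R) _
      (IsNoetherian.noetherian _) ?_ (maximalIdeal_le_jacobson _)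
    rwa [smul_eq_mul, ← pow_succ']
  intro x hxn
  by_contra hx
  have hmem (c : R) (hc : c * x ∈ maximalIdeal R ^ (n + 1)) : c ∈ maximalIdeal R := by
    rw [mem_maximalIdeal, mem_nonunits_iff]
    intro hu
    exact hx ((Ideal.unit_mul_mem_iff_mem _ hu).mp hc)
  let F : R →ₗ.[R] M := ⟨maximalIdeal R ^ (n + 1), 0⟩
  let G : R →ₗ.[R] M := LinearPMap.mkSpanSingleton' x s fun c hc =>
    hs c (hmem c (by rw [← smul_eq_mul, hc]; exact zero_mem _))
  have hFG (u : F.domain) (v : G.domain) (huv : (u : R) = v) : F u = G v := by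
    obtain ⟨v, hv⟩ := v
    obtain ⟨c, rfl⟩ := Submodule.mem_span_singleton.mp hv
    change (u : R) = c * x at huv
    rw [LinearPMap.mkSpanSingleton'_apply, RingHom.id_apply, hs c (hmem c (huv ▸ u.2))]
    rfl
  obtain ⟨y, hy⟩ := h (n + 1) (F.sup G hFG).domain le_sup_left (F.sup G hFG).toFun
  have hyT : y ∈ T (n + 1) := by
    rw [show T (n + 1) = Submodule.torsionBySet R M (maximalIdeal R ^ (n + 1) : Ideal R) from rfl,
      Submodule.mem_torsionBySet_iff]
    intro r
    have hr : (r : R) ∈ (F.sup G hFG).domain := (le_sup_left : F.domain ≤ _) r.2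
    exact (hy ⟨r, hr⟩).symm.trans
      ((F.left_le_sup G hFG).2 (x := r) (y := ⟨r, hr⟩) rfl).symm
  rw [← hn (n + 1) (Nat.le_succ n)] at hyT
  have hxG : x ∈ G.domain := Submodule.mem_span_singleton_self x
  have hxs : s = x • y := by
    have h1 : G ⟨x, hxG⟩ = s := LinearPMap.mkSpanSingleton'_apply_self x s _ hxG
    have hxd : x ∈ (F.sup G hFG).domain := (le_sup_right : G.domain ≤ _) hxG
    rw [← h1]
    exact ((F.right_le_sup G hFG).2 (x := ⟨x, hxG⟩) (y := ⟨x, hxd⟩) rfl).trans (hy ⟨x, hxd⟩)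
  exact hs0 (hxs.trans ((Submodule.mem_torsionBySet_iff _ _).mp hyT ⟨x, hxn⟩))

/-- If `M` is a nonzero finitely generated module of depth `0` over a Noetherian
local ring `R` with `Ext^1_R(R/m, M) = 0`, then `R` is Artinian and `M` is injective. -/
theorem artinian_of_depth_zero_ext_vanishing (R : Type u) [CommRing R] [IsNoetherianRing R]
    [IsLocalRing R] (M : Type u) [AddCommGroup M] [Module R M] [Module.Finite R M]
    [Nontrivial M] (hdepth : depth R M = 0)
    (hext : Subsingleton (extM R (IsLocalRing.ResidueField R) M 1)) :
    IsArtinianRing R ∧ Module.Injective R M := by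
  have hnontriv : Nontrivial (extM R (IsLocalRing.ResidueField R) M 0) := by
    let S : Set ℕ∞ :=
      {n | ∃ i : ℕ, n = i ∧ Nontrivial (extM R (IsLocalRing.ResidueField R) M i)}
    -- If every `Ext` vanished, the infimum defining the depth would be `⊤`.
    have hS : S.Nonempty := by
      by_contra hne
      rw [Set.not_nonempty_iff_eq_empty] at hne
      change sInf S = 0 at hdepth
      simp [hne] at hdepth
    have h0 : sInf S ∈ S := csInf_mem hS
    rw [show sInf S = 0 from hdepth] at h0
    obtain ⟨i, hi, hi'⟩ := h0
    obtain rfl : i = 0 := by exact_mod_cast hi.symm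
    exact hi'
  obtain ⟨s, hs0, hs⟩ := exists_socle_of_ext_zero R M hnontriv
  have hextend := exists_extension_of_pow_le R M (exists_eq_of_ext_one R M hext)
  obtain ⟨n, hn⟩ := exists_maximalIdeal_pow_eq_bot R M hextend s hs0 hs
  refine ⟨(isArtinianRing_iff_isNilpotent_maximalIdeal R).mpr ⟨n, hn⟩, Module.Baer.injective ?_⟩
  intro I f
  obtain ⟨y, hy⟩ := hextend n I (hn ▸ bot_le) f
  exact ⟨LinearMap.toSpanSingleton R M y, fun r hr => (hy ⟨r, hr⟩).symm⟩
end
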